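/- (Petz recovery) Let ρ, σ be density matrices with supp(ρ) ⊆ supp(σ) and Γ a quantum channel. The Petz map R^P_{σ,Γ}[τ] := σ^{1/2} Γ†[(Γ[σ])^{−1/2} τ (Γ[σ])^{−1/2}] σ^{1/2} (with Γ† the adjoint map of Γ, and inverses taken on supports) is a completely positive trace-preserving map on the relevant supports satisfying (R^P∘Γ)[σ] = σ; moreover, if S(ρ‖σ) = S(Γ[ρ]‖Γ[σ]) then (R^P∘Γ)[ρ] = ρ, i.e., equality in the data-processing inequality implies perfect recoverability by the Petz map. -/

import Mathlib

open Matrix Kronecker ComplexOrder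

section Defs
variable {α α' β β' γ : Type*} [Fintype α] [DecidableEq α] [Fintype α'] [DecidableEq α']
  [Fintype β] [DecidableEq β] [Fintype β'] [DecidableEq β'] [Fintype γ] [DecidableEq γ]

/-- A density matrix: a positive semidefinite matrix with unit trace. -/
def IsDensityMatrix (ρ : Matrix β β ℂ) : Prop := ρ.PosSemidef ∧ ρ.trace = 1

/-- The map `id_α ⊗ Λ` induced on matrices over the product index type. -/
noncomputable def idTensor (Λ : Matrix β β ℂ →ₗ[ℂ] Matrix β' β' ℂ) :
    Matrix (α × β) (α × β) ℂ →ₗ[ℂ] Matrix (α × β') (α × β') ℂ where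
  toFun M := Matrix.of fun p q => Λ (Matrix.of fun b b' => M (p.1, b) (q.1, b')) p.2 q.2
  map_add' M N := by
    ext p q
    show Λ (Matrix.of fun b b' => (M + N) (p.1, b) (q.1, b')) p.2 q.2 = _
    have h : (Matrix.of fun b b' => (M + N) (p.1, b) (q.1, b')) =
        (Matrix.of fun b b' => M (p.1, b) (q.1, b')) +
          (Matrix.of fun b b' => N (p.1, b) (q.1, b')) := rfl
    rw [h, map_add]
    rfl
  map_smul' c M := by
    ext p q
    show Λ (Matrix.of fun b b' => (c • M) (p.1, b) (q.1, b')) p.2 q.2 = _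
    have h : (Matrix.of fun b b' => (c • M) (p.1, b) (q.1, b')) =
        c • (Matrix.of fun b b' => M (p.1, b) (q.1, b')) := rfl
    rw [h, _root_.map_smul]
    rfl

/-- Complete positivity: all extensions `id ⊗ Λ` preserve positive semidefiniteness. -/
def IsCompletelyPositive (Λ : Matrix β β ℂ →ₗ[ℂ] Matrix β' β' ℂ) : Prop :=
  ∀ (k : ℕ) (M : Matrix (Fin k × β) (Fin k × β) ℂ), M.PosSemidef → (idTensor Λ M).PosSemidef

/-- A quantum channel: a completely positive trace-preserving linear map. -/
def IsQuantumChannel (Λ : Matrix β β ℂ →ₗ[ℂ] Matrix β' β' ℂ) : Prop :=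
  IsCompletelyPositive Λ ∧ ∀ X, (Λ X).trace = X.trace

/-- The base-2 matrix logarithm of a Hermitian matrix, via the spectral decomposition
(with the convention `log 0 = 0` on the kernel; junk value `0` for non-Hermitian input). -/
noncomputable def mlog2 (A : Matrix β β ℂ) : Matrix β β ℂ :=
  if h : A.IsHermitian then
    (h.eigenvectorUnitary : Matrix β β ℂ) *
      Matrix.diagonal (fun i => (Real.logb 2 (h.eigenvalues i) : ℂ)) *
      (star h.eigenvectorUnitary : Matrix β β ℂ)
  else 0

/-- The relative entropy `S(ρ‖σ) = Tr(ρ log₂ ρ) - Tr(ρ log₂ σ)`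
(for `supp ρ ⊆ supp σ`). -/
noncomputable def relEnt (ρ σ : Matrix β β ℂ) : ℝ :=
  ((ρ * mlog2 ρ).trace - (ρ * mlog2 σ).trace).re

/-- Functional calculus for Hermitian matrices via the spectral decomposition
(junk value `0` for non-Hermitian input). -/
noncomputable def matFun (f : ℝ → ℝ) (A : Matrix β β ℂ) : Matrix β β ℂ :=
  if h : A.IsHermitian then
    (h.eigenvectorUnitary : Matrix β β ℂ) *
      Matrix.diagonal (fun i => (f (h.eigenvalues i) : ℂ)) *
      (star h.eigenvectorUnitary : Matrix β β ℂ)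
  else 0

/-- The orthogonal projection onto the support of a Hermitian matrix. -/
noncomputable def suppProj (A : Matrix β β ℂ) : Matrix β β ℂ :=
  matFun (fun x => if x = 0 then 0 else 1) A

/-- The inverse square root on the support of a Hermitian matrix
(recall `(√0)⁻¹ = 0` in Lean's conventions). -/
noncomputable def invSqrt (A : Matrix β β ℂ) : Matrix β β ℂ :=
  matFun (fun x => (Real.sqrt x)⁻¹) A

end Defs

/-- The Petz recovery map
`R^P_{σ,Γ}[τ] = σ^{1/2} Γ†[(Γ[σ])^{-1/2} τ (Γ[σ])^{-1/2}] σ^{1/2}`,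
with inverses taken on supports. -/
noncomputable def petzMap {n m : Type*} [Fintype n] [DecidableEq n]
    [Fintype m] [DecidableEq m]
    (σ : Matrix n n ℂ) (Γ : Matrix n n ℂ →ₗ[ℂ] Matrix m m ℂ)
    (Γdag : Matrix m m ℂ →ₗ[ℂ] Matrix n n ℂ) :
    Matrix m m ℂ →ₗ[ℂ] Matrix n n ℂ where
  toFun τ := matFun Real.sqrt σ *
      Γdag (invSqrt (Γ σ) * τ * invSqrt (Γ σ)) * matFun Real.sqrt σ
  map_add' τ τ' := by
    simp only [mul_add, add_mul, map_add]
  map_smul' c τ := by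
    simp only [Matrix.mul_smul, Matrix.smul_mul, _root_.map_smul, RingHom.id_apply]

/-!
For `u > 0` let `X u` be the resolvent `(u + Δ)⁻¹` at `1` of the relative modular operator
`Δ X = σ⁻¹ X ρ`, and `Y u` its analogue for `(Γ σ, Γ ρ)`. The Schwarz inequality for the unital
completely positive map `Γ†` shows that the quadratic form of `u + Δ` at `Γ† Y` is at most that of
its analogue at `Y`. Since `X u` and `Y u` minimise the associated variational problems, the form
at `X u - Γ† (Y u)` is bounded by a positive multiple of minus the `u`-derivative of
`Tr ρ log₂ (u σ + ρ) - Tr Γ ρ log₂ (u Γ σ + Γ ρ)` (with `σ` acting from the left and `ρ` from the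
right). As `u` runs from `0` to `∞` this difference decreases by `S(ρ‖σ) - S(Γ ρ‖Γ σ)`, so if the
relative entropies agree then `σ X u = σ Γ† (Y u)` for all `u`.

On the finitely many eigenvalue ratios involved, the square root is a linear combination of
resolvents, with the same coefficients for both pairs. Hence `√ρ = √σ Γ†[A]` with
`A = (Γ σ)^(-1/2) (Γ ρ)^(1/2)`, and the Schwarz inequality at `A` says that `ρ` is at most
`√σ Γ†[A Aᴴ] √σ`, the Petz map at `Γ ρ`. The two have the same trace, so they are equal.
-/

section PositiveSemidefinite

variable {n m : Type*} [Fintype n]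

open scoped MatrixOrder in
theorem exists_eq_conjTranspose_mul_self {A : Matrix n n ℂ} (hA : A.PosSemidef) :
    ∃ C : Matrix n n ℂ, A = Cᴴ * C := by
  classical
  exact CStarAlgebra.nonneg_iff_eq_star_mul_self.mp hA.nonneg

theorem trace_mul_nonneg_of_posSemidef {A B : Matrix n n ℂ} (hA : A.PosSemidef)
    (hB : B.PosSemidef) : 0 ≤ (A * B).trace := by
  obtain ⟨C, rfl⟩ := exists_eq_conjTranspose_mul_self hA
  rw [Matrix.mul_assoc, trace_mul_comm]
  exact (hB.mul_mul_conjTranspose_same C).trace_nonneg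

theorem mul_eq_zero_of_trace_conj_eq_zero {A : Matrix n n ℂ} [Fintype m]
    (hA : A.PosSemidef) {Z : Matrix n m ℂ} (h : (Zᴴ * A * Z).trace = 0) : A * Z = 0 := by
  obtain ⟨C, rfl⟩ := exists_eq_conjTranspose_mul_self hA
  have hCZ : C * Z = 0 := by
    rw [← trace_conjTranspose_mul_self_eq_zero_iff, conjTranspose_mul]
    simpa only [Matrix.mul_assoc] using h
  rw [Matrix.mul_assoc, hCZ, Matrix.mul_zero]

theorem mul_eq_zero_of_trace_mul_eq_zero {A B : Matrix n n ℂ} (hA : A.PosSemidef)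
    (hB : B.PosSemidef) (h : (A * B).trace = 0) : A * B = 0 := by
  obtain ⟨C, rfl⟩ := exists_eq_conjTranspose_mul_self hB
  rw [← Matrix.mul_assoc, mul_eq_zero_of_trace_conj_eq_zero hA (Z := Cᴴ), Matrix.zero_mul]
  rwa [conjTranspose_conjTranspose, Matrix.mul_assoc, trace_mul_comm, Matrix.mul_assoc]

theorem posSemidef_of_forall_trace_mul_nonneg {M : Matrix n n ℂ}
    (h : ∀ N : Matrix n n ℂ, N.PosSemidef → 0 ≤ (N * M).trace) : M.PosSemidef := by
  classical
  rw [← isPositive_toEuclideanLin_iff, LinearMap.isPositive_iff_complex]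
  intro x
  have hx : 0 ≤ star x.ofLp ⬝ᵥ M *ᵥ x.ofLp := by
    have := h _ (posSemidef_vecMulVec_self_star x.ofLp)
    rwa [vecMulVec_mul, trace_vecMulVec, dotProduct_comm, ← dotProduct_mulVec] at this
  have hinner : 0 ≤ inner ℂ (M.toEuclideanLin x) x := by
    rw [← inner_conj_symm]
    exact star_nonneg_iff.mpr (hx.trans_eq (dotProduct_comm _ _))
  obtain ⟨hre, him⟩ := Complex.nonneg_iff.mp hinner
  exact ⟨Complex.ext rfl him, hre⟩

theorem mul_eq_zero_of_ker_le_ker {A B : Matrix n n ℂ} (h : ∀ v, A *ᵥ v = 0 → B *ᵥ v = 0)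
    {M : Matrix n m ℂ} (hM : A * M = 0) : B * M = 0 := by
  ext i j
  exact congrFun (h (M.col j) (funext fun i => congrFun (congrFun hM i) j)) i

end PositiveSemidefinite

section TraceAdjoint

variable {n m : Type*} [Fintype n] [Fintype m]

/-- `Γdag` is the adjoint of `Γ` for the Hilbert–Schmidt inner product `⟨X, Y⟩ = Tr (Xᴴ Y)`. -/
def IsTraceAdjoint (Γ : Matrix n n ℂ →ₗ[ℂ] Matrix m m ℂ)
    (Γdag : Matrix m m ℂ →ₗ[ℂ] Matrix n n ℂ) : Prop :=
  ∀ X Y, (Xᴴ * Γ Y).trace = ((Γdag X)ᴴ * Y).trace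

namespace IsTraceAdjoint

variable {Γ : Matrix n n ℂ →ₗ[ℂ] Matrix m m ℂ} {Γdag : Matrix m m ℂ →ₗ[ℂ] Matrix n n ℂ}

theorem symm (h : IsTraceAdjoint Γ Γdag) : IsTraceAdjoint Γdag Γ := fun Y X => by
  simpa only [← trace_conjTranspose, conjTranspose_mul, conjTranspose_conjTranspose] using
    (congrArg star (h X Y)).symm

theorem map_one [DecidableEq n] [DecidableEq m] (h : IsTraceAdjoint Γ Γdag)
    (htr : ∀ X, (Γ X).trace = X.trace) : Γdag 1 = 1 := by
  refine ext_iff_trace_mul_left.mpr fun X => ?_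
  rw [← conjTranspose_conjTranspose X, h.symm, Matrix.mul_one, Matrix.mul_one,
    trace_conjTranspose, trace_conjTranspose Xᴴ, htr]

theorem idTensor {α : Type*} [Fintype α] (h : IsTraceAdjoint Γ Γdag) :
    IsTraceAdjoint (idTensor (α := α) Γ) (idTensor (α := α) Γdag) := by
  intro X Y
  have hblock := fun a a' => h (of fun b b' => X (a, b) (a', b')) (of fun b b' => Y (a, b) (a', b'))
  simp only [trace, diag_apply, mul_apply, conjTranspose_apply, of_apply] at hblock
  simp only [trace, diag_apply, mul_apply, conjTranspose_apply, Fintype.sum_prod_type]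
  simp only [Finset.sum_comm (s := (Finset.univ : Finset m)) (t := (Finset.univ : Finset α)),
    Finset.sum_comm (s := (Finset.univ : Finset n)) (t := (Finset.univ : Finset α))]
  exact Finset.sum_congr rfl fun a' _ => Finset.sum_congr rfl fun a _ => hblock a a'

end IsTraceAdjoint

end TraceAdjoint

section CompletePositivity

variable {n m l : Type*}

/-- The map `X ↦ A X Aᴴ`, completely positive with the single Kraus operator `A`. -/
noncomputable def conjBy [Fintype n] (A : Matrix m n ℂ) : Matrix n n ℂ →ₗ[ℂ] Matrix m m ℂ :=
  mulRightLinearMap m ℂ Aᴴ ∘ₗ mulLeftLinearMap n ℂ A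

theorem idTensor_conjBy [Fintype n] {α : Type*} [Fintype α] [DecidableEq α] (A : Matrix m n ℂ)
    (M : Matrix (α × n) (α × n) ℂ) :
    idTensor (conjBy A) M = ((1 : Matrix α α ℂ) ⊗ₖ A) * M * ((1 : Matrix α α ℂ) ⊗ₖ A)ᴴ := by
  ext ⟨a, b⟩ ⟨a', b'⟩
  change (A * of (fun x x' => M (a, x) (a', x')) * Aᴴ) b b' = _
  simp [mul_apply, Fintype.sum_prod_type, one_apply, apply_ite star, ite_mul, mul_ite]

theorem isCompletelyPositive_conjBy [Fintype n] [Finite m] (A : Matrix m n ℂ) :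
    IsCompletelyPositive (conjBy A) := by
  have := Fintype.ofFinite m
  intro k M hM
  rw [idTensor_conjBy]
  exact hM.mul_mul_conjTranspose_same _

namespace IsCompletelyPositive

variable {Φ : Matrix n n ℂ →ₗ[ℂ] Matrix m m ℂ}

theorem comp {Ψ : Matrix m m ℂ →ₗ[ℂ] Matrix l l ℂ} (hΨ : IsCompletelyPositive Ψ)
    (hΦ : IsCompletelyPositive Φ) : IsCompletelyPositive (Ψ ∘ₗ Φ) :=
  fun k M hM => hΨ k _ (hΦ k M hM)

theorem of_isTraceAdjoint [Fintype n] [Fintype m] {Φdag : Matrix m m ℂ →ₗ[ℂ] Matrix n n ℂ}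
    (hΦ : IsCompletelyPositive Φ) (h : IsTraceAdjoint Φ Φdag) : IsCompletelyPositive Φdag := by
  intro k M hM
  refine posSemidef_of_forall_trace_mul_nonneg fun N hN => ?_
  have := trace_mul_nonneg_of_posSemidef (hΦ k N hN) hM
  rwa [← (hΦ k N hN).isHermitian.eq, ← h.idTensor.symm, hN.isHermitian.eq] at this

theorem posSemidef_map (hΦ : IsCompletelyPositive Φ) {A : Matrix n n ℂ} (hA : A.PosSemidef) :
    (Φ A).PosSemidef :=
  (hΦ 1 _ (hA.submatrix Prod.snd)).submatrix fun i => (0, i)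

theorem posSemidef_fromBlocks (hΦ : IsCompletelyPositive Φ) {A B C D : Matrix n n ℂ}
    (h : (fromBlocks A B C D).PosSemidef) :
    (fromBlocks (Φ A) (Φ B) (Φ C) (Φ D)).PosSemidef := by
  let toSum : Fin 2 × n → n ⊕ n := fun p => if p.1 = 0 then .inl p.2 else .inr p.2
  let ofSum : m ⊕ m → Fin 2 × m := Sum.elim (fun i => (0, i)) (fun i => (1, i))
  convert (hΦ 2 _ (h.submatrix toSum)).submatrix ofSum using 1
  ext (i | i) (j | j) <;> rfl

theorem posSemidef_fromBlocks_mul_conjTranspose [Fintype n] [DecidableEq n]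
    (hΦ : IsCompletelyPositive Φ) (Y : Matrix n n ℂ) :
    (fromBlocks (Φ (Y * Yᴴ)) (Φ Y) (Φ Yᴴ) (Φ 1)).PosSemidef := by
  let := invertibleOne (α := Matrix n n ℂ)
  refine hΦ.posSemidef_fromBlocks ((PosDef.one.fromBlocks₂₂ _ _).mpr ?_)
  simpa using PosSemidef.zero

theorem map_conjTranspose [Finite n] (hΦ : IsCompletelyPositive Φ) (Y : Matrix n n ℂ) :
    Φ Yᴴ = (Φ Y)ᴴ := by
  classical
  have := Fintype.ofFinite n
  exact (isHermitian_fromBlocks_iff.mp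
    (hΦ.posSemidef_fromBlocks_mul_conjTranspose Y).isHermitian).2.1.symm

theorem schwarz [Fintype n] [DecidableEq n] [Fintype m] [DecidableEq m]
    (hΦ : IsCompletelyPositive Φ) (h1 : Φ 1 = 1) (Y : Matrix n n ℂ) :
    (Φ (Y * Yᴴ) - Φ Y * (Φ Y)ᴴ).PosSemidef := by
  have h := hΦ.posSemidef_fromBlocks_mul_conjTranspose Y
  rw [hΦ.map_conjTranspose, h1] at h
  let := invertibleOne (α := Matrix m m ℂ)
  simpa using (PosDef.one.fromBlocks₂₂ _ _).mp h

end IsCompletelyPositive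

end CompletePositivity

theorem conj_mul_conj_of_mul_eq_one {M : Type*} [Monoid M] {u d v v' e w : M} (h : v * v' = 1) :
    (u * d * v) * (v' * e * w) = u * (d * e) * w := by
  rw [mul_assoc (u * d), ← mul_assoc v, ← mul_assoc v, h, one_mul, mul_assoc u, mul_assoc u,
    mul_assoc d]

section FunctionalCalculus

variable {n : Type*} [Fintype n] [DecidableEq n] {A : Matrix n n ℂ}

theorem isHermitian_matFun (f : ℝ → ℝ) (A : Matrix n n ℂ) : (matFun f A).IsHermitian := by
  unfold matFun
  split_ifs with h
  · refine isHermitian_mul_mul_conjTranspose _ (isHermitian_diagonal_of_self_adjoint _ ?_)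
    exact funext fun i => Complex.conj_ofReal _
  · exact isHermitian_zero

theorem isHermitian_invSqrt (A : Matrix n n ℂ) : (invSqrt A).IsHermitian :=
  isHermitian_matFun _ A

theorem matFun_mul_matFun (f g : ℝ → ℝ) (A : Matrix n n ℂ) :
    matFun f A * matFun g A = matFun (fun x => f x * g x) A := by
  unfold matFun
  split_ifs with h
  · rw [conj_mul_conj_of_mul_eq_one (Unitary.coe_star_mul_self h.eigenvectorUnitary),
      diagonal_mul_diagonal]
    simp only [Complex.ofReal_mul]
  · exact Matrix.mul_zero 0

theorem matFun_congr_of_posSemidef (hA : A.PosSemidef) {f g : ℝ → ℝ}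
    (h : ∀ x, 0 ≤ x → f x = g x) : matFun f A = matFun g A := by
  simp only [matFun, h _ (hA.eigenvalues_nonneg _)]

theorem matFun_id (hA : A.IsHermitian) : matFun (fun x => x) A = A := by
  rw [matFun, dif_pos hA]
  exact hA.spectral_theorem.symm

theorem matFun_sqrt_mul_self (hA : A.PosSemidef) : matFun Real.sqrt A * matFun Real.sqrt A = A := by
  rw [matFun_mul_matFun, matFun_congr_of_posSemidef hA (fun x => Real.mul_self_sqrt),
    matFun_id hA.isHermitian]

theorem invSqrt_mul_self (hA : A.PosSemidef) : invSqrt A * A = matFun Real.sqrt A := by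
  nth_rw 2 [← matFun_id hA.isHermitian]
  rw [invSqrt, matFun_mul_matFun]
  refine matFun_congr_of_posSemidef hA fun x _ => ?_
  rw [inv_mul_eq_div, Real.div_sqrt]

theorem self_mul_invSqrt (hA : A.PosSemidef) : A * invSqrt A = matFun Real.sqrt A := by
  simpa only [conjTranspose_mul, (isHermitian_matFun _ A).eq, (isHermitian_invSqrt A).eq,
    hA.isHermitian.eq] using
    congrArg conjTranspose (invSqrt_mul_self hA)

theorem invSqrt_mul_self_mul_invSqrt (hA : A.PosSemidef) :
    invSqrt A * A * invSqrt A = suppProj A := by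
  rw [invSqrt_mul_self hA, invSqrt, matFun_mul_matFun, suppProj]
  refine matFun_congr_of_posSemidef hA fun x hx => ?_
  by_cases h0 : x = 0
  · simp [h0]
  · rw [if_neg h0, mul_inv_cancel₀ (Real.sqrt_ne_zero'.mpr (hx.lt_of_ne' h0))]

theorem self_mul_suppProj (hA : A.IsHermitian) : A * suppProj A = A := by
  nth_rw 1 3 [← matFun_id hA]
  rw [suppProj, matFun_mul_matFun]
  congr 1 with x
  simp +contextual [eq_comm]

theorem suppProj_mul_self (A : Matrix n n ℂ) : suppProj A * suppProj A = suppProj A := by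
  rw [suppProj, matFun_mul_matFun]
  congr 1 with x
  split_ifs <;> simp

theorem mul_suppProj_of_ker_le_ker {B : Matrix n n ℂ} (hA : A.IsHermitian)
    (h : ∀ v, A *ᵥ v = 0 → B *ᵥ v = 0) : B * suppProj A = B := by
  have hker : A * (suppProj A - 1) = 0 := by
    rw [Matrix.mul_sub, self_mul_suppProj hA, Matrix.mul_one, sub_self]
  simpa [Matrix.mul_sub, sub_eq_zero] using mul_eq_zero_of_ker_le_ker h hker

theorem suppProj_mul_of_ker_le_ker {B : Matrix n n ℂ} (hA : A.IsHermitian) (hB : B.IsHermitian)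
    (h : ∀ v, A *ᵥ v = 0 → B *ᵥ v = 0) : suppProj A * B = B := by
  simpa [suppProj, (isHermitian_matFun _ A).eq, hB.eq] using
    congrArg conjTranspose (mul_suppProj_of_ker_le_ker hA h)

end FunctionalCalculus

section DoubleFunctionalCalculus

variable {n : Type*} [Fintype n] [DecidableEq n] {A B : Matrix n n ℂ}

/-- For Hermitian `A`, `B` with spectral projections `Pⱼ`, `Qᵢ` at the eigenvalues `aⱼ`, `bᵢ`, the
matrix `∑ g(aⱼ, bᵢ) Pⱼ Qᵢ`. It is the value at `1` of `g` applied to the commuting pair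
"left multiplication by `A`, right multiplication by `B`"; it is written here in the eigenbases of
`A` and `B`. -/
noncomputable def doubleFun (hA : A.IsHermitian) (hB : B.IsHermitian) :
    (ℝ → ℝ → ℝ) →ₗ[ℝ] Matrix n n ℂ where
  toFun g := (hA.eigenvectorUnitary : Matrix n n ℂ) *
    (of fun j i => (g (hA.eigenvalues j) (hB.eigenvalues i) : ℂ) *
      (star (hA.eigenvectorUnitary : Matrix n n ℂ) * hB.eigenvectorUnitary) j i) *
    star (hB.eigenvectorUnitary : Matrix n n ℂ)
  map_add' g h := by
    rw [← Matrix.add_mul, ← Matrix.mul_add]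
    congr 2
    ext j i
    simp [add_mul]
  map_smul' c g := by
    rw [RingHom.id_apply, ← Matrix.smul_mul, ← Matrix.mul_smul]
    congr 2
    ext j i
    simp [mul_assoc]

variable (hA : A.IsHermitian) (hB : B.IsHermitian) (f : ℝ → ℝ) (g : ℝ → ℝ → ℝ)

theorem matFun_mul_doubleFun :
    matFun f A * doubleFun hA hB g = doubleFun hA hB fun x y => f x * g x y := by
  simp only [matFun, dif_pos hA, doubleFun, LinearMap.coe_mk, AddHom.coe_mk]
  rw [conj_mul_conj_of_mul_eq_one (Unitary.coe_star_mul_self hA.eigenvectorUnitary)]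
  congr 2
  ext j i
  rw [diagonal_mul, of_apply, of_apply, Complex.ofReal_mul, mul_assoc]

theorem doubleFun_mul_matFun :
    doubleFun hA hB g * matFun f B = doubleFun hA hB fun x y => g x y * f y := by
  simp only [matFun, dif_pos hB, doubleFun, LinearMap.coe_mk, AddHom.coe_mk]
  rw [conj_mul_conj_of_mul_eq_one (Unitary.coe_star_mul_self hB.eigenvectorUnitary)]
  congr 2
  ext j i
  rw [mul_diagonal, of_apply, of_apply, Complex.ofReal_mul, mul_right_comm]

theorem doubleFun_one : doubleFun hA hB (fun _ _ => 1) = 1 := by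
  simp only [doubleFun, LinearMap.coe_mk, AddHom.coe_mk, Complex.ofReal_one, one_mul]
  change (hA.eigenvectorUnitary : Matrix n n ℂ) *
    (star (hA.eigenvectorUnitary : Matrix n n ℂ) * hB.eigenvectorUnitary) * _ = 1
  rw [← Matrix.mul_assoc, Unitary.mul_star_self_of_mem (SetLike.coe_mem _), Matrix.one_mul,
    Unitary.mul_star_self_of_mem (SetLike.coe_mem _)]

theorem doubleFun_fst : doubleFun hA hB (fun x _ => f x) = matFun f A := by
  simpa [doubleFun_one] using (matFun_mul_doubleFun hA hB f fun _ _ => 1).symm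

theorem doubleFun_snd : doubleFun hA hB (fun _ y => f y) = matFun f B := by
  simpa [doubleFun_one] using (doubleFun_mul_matFun hA hB f fun _ _ => 1).symm

theorem mul_doubleFun : A * doubleFun hA hB g = doubleFun hA hB fun x y => x * g x y := by
  simpa only [matFun_id hA] using matFun_mul_doubleFun hA hB (fun x => x) g

theorem doubleFun_mul : doubleFun hA hB g * B = doubleFun hA hB fun x y => g x y * y := by
  simpa only [matFun_id hB] using doubleFun_mul_matFun hA hB (fun y => y) g

theorem doubleFun_fst_id : doubleFun hA hB (fun x _ => x) = A := by
  rw [doubleFun_fst hA hB fun x => x, matFun_id hA]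

theorem doubleFun_snd_id : doubleFun hA hB (fun _ y => y) = B := by
  rw [doubleFun_snd hA hB fun y => y, matFun_id hB]

theorem matFun_mul_matFun_eq_doubleFun (h : ℝ → ℝ) :
    matFun f A * matFun h B = doubleFun hA hB fun x y => f x * h y := by
  rw [← doubleFun_snd hA hB h, matFun_mul_doubleFun]

/-- The squared modulus of the inner product of the `j`-th eigenvector of `A` with the `i`-th
eigenvector of `B`. -/
noncomputable def eigenOverlap (j i : n) : ℝ :=
  Complex.normSq ((star (hA.eigenvectorUnitary : Matrix n n ℂ) * hB.eigenvectorUnitary) j i)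

theorem re_trace_doubleFun : (doubleFun hA hB g).trace.re =
    ∑ j, ∑ i, g (hA.eigenvalues j) (hB.eigenvalues i) * eigenOverlap hA hB j i := by
  rw [← Complex.ofReal_re (∑ j, _)]
  congr 1
  simp only [doubleFun, LinearMap.coe_mk, AddHom.coe_mk, eigenOverlap]
  rw [trace_mul_cycle, ← star_star (hA.eigenvectorUnitary : Matrix n n ℂ), ← star_mul, star_star,
    trace, Finset.sum_comm]
  simp only [diag_apply, mul_apply (M := star _), star_apply, of_apply, Complex.ofReal_sum,
    Complex.ofReal_mul]
  refine Finset.sum_congr rfl fun i _ => Finset.sum_congr rfl fun j _ => ?_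
  rw [Complex.normSq_eq_conj_mul_self, mul_left_comm]
  rfl

variable {hA hB g} in
theorem doubleFun_congr {h : ℝ → ℝ → ℝ}
    (hgh : ∀ j i,
      g (hA.eigenvalues j) (hB.eigenvalues i) = h (hA.eigenvalues j) (hB.eigenvalues i)) :
    doubleFun hA hB g = doubleFun hA hB h := by
  simp only [doubleFun, LinearMap.coe_mk, AddHom.coe_mk, hgh]

theorem eigenvalue_eq_zero_of_ker_le_ker (h : ∀ v, A *ᵥ v = 0 → B *ᵥ v = 0) {j i : n}
    (hj : hA.eigenvalues j = 0) (hji : eigenOverlap hA hB j i ≠ 0) : hB.eigenvalues i = 0 := by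
  let u : n → ℂ := hA.eigenvectorBasis j
  let v : n → ℂ := hB.eigenvectorBasis i
  have hBu : B *ᵥ u = 0 := h _ (by rw [hA.mulVec_eigenvectorBasis, hj, zero_smul])
  have horth : (hB.eigenvalues i : ℂ) * (star u ⬝ᵥ v) = 0 := by
    have hBv : B *ᵥ v = (hB.eigenvalues i : ℂ) • v := hB.mulVec_eigenvectorBasis i
    rw [← smul_eq_mul, ← dotProduct_smul, ← hBv, dotProduct_mulVec, ← hB.eq, ← star_mulVec, hBu,
      star_zero, zero_dotProduct]
  have huv : star u ⬝ᵥ v ≠ 0 := fun h0 => hji (Complex.normSq_eq_zero.mpr h0)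
  exact_mod_cast (mul_eq_zero.mp horth).resolve_right huv

end DoubleFunctionalCalculus

section ModularResolvent

variable {n : Type*} [Fintype n] [DecidableEq n] {σ ρ : Matrix n n ℂ}

/-- The resolvent `(u + Δ)⁻¹` at `1` of the relative modular operator `Δ X = σ⁻¹ X ρ`, extended by
`0` off the support of `σ`. -/
noncomputable def modularResolvent (hσ : σ.IsHermitian) (hρ : ρ.IsHermitian) (u : ℝ) :
    Matrix n n ℂ :=
  doubleFun hσ hρ fun x y => x / (u * x + y)

theorem smul_mul_modularResolvent_add (hσ : σ.PosSemidef) (hρ : ρ.PosSemidef) {u : ℝ} (hu : 0 < u) :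
    u • (σ * modularResolvent hσ.isHermitian hρ.isHermitian u) +
      modularResolvent hσ.isHermitian hρ.isHermitian u * ρ = σ := by
  rw [modularResolvent, mul_doubleFun, doubleFun_mul, ← map_smul, ← map_add]
  refine Eq.trans ?_ (doubleFun_fst_id hσ.isHermitian hρ.isHermitian)
  refine doubleFun_congr fun j i => ?_
  have hy := hρ.eigenvalues_nonneg i
  simp only [Pi.add_apply, Pi.smul_apply, smul_eq_mul]
  rcases (hσ.eigenvalues_nonneg j).eq_or_lt with hx | hx
  · simp [← hx]
  · field_simp

end ModularResolvent

section ScalarPotential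

variable {x y : ℝ}

theorem continuousOn_mul_logb_affine (hx : 0 ≤ x) (hy : 0 ≤ y) :
    ContinuousOn (fun u => y * Real.logb 2 (u * x + y)) (Set.Ici 0) := by
  rcases hy.eq_or_lt with rfl | hy
  · simpa using continuousOn_const
  · refine continuousOn_const.mul (ContinuousOn.logb (by fun_prop) fun u (hu : 0 ≤ u) => ?_)
    positivity

theorem hasDerivAt_mul_logb_affine (hx : 0 ≤ x) (hy : 0 ≤ y) {u : ℝ} (hu : 0 < u) :
    HasDerivAt (fun u => y * Real.logb 2 (u * x + y)) (x / (u * x + y) * y / Real.log 2) u := by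
  rcases hy.eq_or_lt with rfl | hy
  · simpa using hasDerivAt_const u (0 : ℝ)
  · have h := ((((hasDerivAt_id u).mul_const x).add_const y).log
      (by simp only [id]; positivity)).const_mul (y / Real.log 2)
    refine (h.congr_deriv ?_).congr_of_eventuallyEq ?_
    · simp only [id]; ring
    · exact .of_forall fun v => by simp only [Real.logb, id]; ring

theorem tendsto_mul_logb_affine (hx : 0 ≤ x) (hy : 0 ≤ y) (hxy : x = 0 → y = 0) :
    Filter.Tendsto (fun u => y * Real.logb 2 (u * x + y) - Real.logb 2 u * y) Filter.atTop
      (nhds (Real.logb 2 x * y)) := by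
  rcases hx.eq_or_lt with rfl | hx
  · simp [hxy rfl]
  · have hlim : Filter.Tendsto (fun u => x + y / u) Filter.atTop (nhds (x + 0)) :=
      tendsto_const_nhds.add (Filter.tendsto_id.const_div_atTop y)
    rw [add_zero] at hlim
    have hlog := ((Real.continuousAt_log hx.ne').tendsto.comp hlim).const_mul (y / Real.log 2)
    rw [Real.logb, div_mul_eq_mul_div, mul_comm, mul_div_right_comm]
    refine hlog.congr' ?_
    filter_upwards [Filter.eventually_gt_atTop 0] with u hu
    have hfactor : u * x + y = u * (x + y / u) := by field_simp
    have hpos : x + y / u ≠ 0 := by positivity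
    simp only [Function.comp_apply, Real.logb, hfactor, Real.log_mul hu.ne' hpos]
    ring

end ScalarPotential

section EntropyPotential

variable {n : Type*} [Fintype n] [DecidableEq n] {σ ρ : Matrix n n ℂ}

/-- The function `u ↦ Tr ρ log₂ (u σ + ρ)`, read with `σ` acting from the left and `ρ` from the
right. It interpolates between the two terms of the relative entropy, attained at `u = 0` and (after
subtracting `Tr ρ log₂ u`) at `u = ∞`. -/
noncomputable def entropyPotential (hσ : σ.IsHermitian) (hρ : ρ.IsHermitian) (u : ℝ) : ℝ :=
  (doubleFun hσ hρ fun x y => y * Real.logb 2 (u * x + y)).trace.re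

theorem entropyPotential_eq_sum (hσ : σ.IsHermitian) (hρ : ρ.IsHermitian) (u : ℝ) :
    entropyPotential hσ hρ u = ∑ j, ∑ i, hρ.eigenvalues i *
      Real.logb 2 (u * hσ.eigenvalues j + hρ.eigenvalues i) * eigenOverlap hσ hρ j i :=
  re_trace_doubleFun _ _ _

theorem entropyPotential_zero (hσ : σ.IsHermitian) (hρ : ρ.IsHermitian) :
    entropyPotential hσ hρ 0 = (ρ * mlog2 ρ).trace.re := by
  have hlog : ρ * mlog2 ρ = matFun (fun y => y * Real.logb 2 y) ρ := by
    rw [← matFun_mul_matFun, matFun_id hρ]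
    rfl
  simp only [entropyPotential, zero_mul, zero_add, doubleFun_snd hσ hρ, hlog]

theorem continuousOn_entropyPotential (hσ : σ.PosSemidef) (hρ : ρ.PosSemidef) :
    ContinuousOn (entropyPotential hσ.isHermitian hρ.isHermitian) (Set.Ici 0) := by
  rw [funext (entropyPotential_eq_sum hσ.isHermitian hρ.isHermitian)]
  refine continuousOn_finsetSum _ fun j _ => continuousOn_finsetSum _ fun i _ =>
    (continuousOn_mul_logb_affine (hσ.eigenvalues_nonneg j) (hρ.eigenvalues_nonneg i)).mul
      continuousOn_const

theorem hasDerivAt_entropyPotential (hσ : σ.PosSemidef) (hρ : ρ.PosSemidef) {u : ℝ} (hu : 0 < u) :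
    HasDerivAt (entropyPotential hσ.isHermitian hρ.isHermitian)
      ((modularResolvent hσ.isHermitian hρ.isHermitian u * ρ).trace.re / Real.log 2) u := by
  rw [funext (entropyPotential_eq_sum hσ.isHermitian hρ.isHermitian), modularResolvent,
    doubleFun_mul, re_trace_doubleFun]
  have h := HasDerivAt.fun_sum fun j (_ : j ∈ Finset.univ) =>
    HasDerivAt.fun_sum fun i (_ : i ∈ Finset.univ) =>
      (hasDerivAt_mul_logb_affine (hσ.eigenvalues_nonneg j) (hρ.eigenvalues_nonneg i) hu).mul_const
        (eigenOverlap hσ.isHermitian hρ.isHermitian j i)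
  refine h.congr_deriv ?_
  simp only [Finset.sum_div, div_mul_eq_mul_div]

theorem tendsto_entropyPotential (hσ : σ.PosSemidef) (hρ : ρ.PosSemidef)
    (hsupp : ∀ v, σ *ᵥ v = 0 → ρ *ᵥ v = 0) :
    Filter.Tendsto
      (fun u => entropyPotential hσ.isHermitian hρ.isHermitian u - Real.logb 2 u * ρ.trace.re)
      Filter.atTop (nhds (ρ * mlog2 σ).trace.re) := by
  have htrace := re_trace_doubleFun hσ.isHermitian hρ.isHermitian fun _ y => y
  rw [doubleFun_snd_id] at htrace
  have hlimit : (ρ * mlog2 σ).trace.re = ∑ j, ∑ i, Real.logb 2 (hσ.isHermitian.eigenvalues j) *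
      hρ.isHermitian.eigenvalues i * eigenOverlap hσ.isHermitian hρ.isHermitian j i := by
    have hmul : mlog2 σ * ρ =
        doubleFun hσ.isHermitian hρ.isHermitian fun x y => Real.logb 2 x * y := by
      rw [← matFun_mul_doubleFun, doubleFun_snd_id]
      rfl
    rw [trace_mul_comm, hmul, re_trace_doubleFun]
  simp only [entropyPotential_eq_sum, htrace, hlimit, Finset.mul_sum, ← Finset.sum_sub_distrib,
    ← mul_assoc, ← sub_mul]
  refine tendsto_finsetSum _ fun j _ => tendsto_finsetSum _ fun i _ => ?_
  rcases eq_or_ne (eigenOverlap hσ.isHermitian hρ.isHermitian j i) 0 with h0 | h0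
  · simp [h0]
  · exact (tendsto_mul_logb_affine (hσ.eigenvalues_nonneg j) (hρ.eigenvalues_nonneg i) fun hj =>
      eigenvalue_eq_zero_of_ker_le_ker _ _ hsupp hj h0).mul_const _

end EntropyPotential

section MonotoneLimit

theorem deriv_eq_zero_of_tendsto_left_value {f f' : ℝ → ℝ} {a : ℝ}
    (hcont : ContinuousOn f (Set.Ici a)) (hderiv : ∀ u, a < u → HasDerivAt f (f' u) u)
    (hnonpos : ∀ u, a < u → f' u ≤ 0) (hlim : Filter.Tendsto f Filter.atTop (nhds (f a)))
    {u : ℝ} (hu : a < u) : f' u = 0 := by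
  have hanti : AntitoneOn f (Set.Ici a) := by
    refine antitoneOn_of_deriv_nonpos (convex_Ici a) hcont ?_ ?_ <;> rw [interior_Ici]
    · exact fun v hv => (hderiv v hv).differentiableAt.differentiableWithinAt
    · exact fun v hv => (hderiv v hv).deriv ▸ hnonpos v hv
  have hconst : ∀ v, a < v → f v = f a := fun v hv =>
    (hanti Set.self_mem_Ici hv.le hv.le).antisymm <| le_of_tendsto hlim <|
      (Filter.eventually_ge_atTop v).mono fun w hw => hanti hv.le (hv.le.trans hw) hw
  exact (hderiv u hu).unique <| (hasDerivAt_const u (f a)).congr_of_eventuallyEq <|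
    (eventually_gt_nhds hu).mono hconst

end MonotoneLimit

section ModularForm

variable {n m : Type*} [Fintype n] [Fintype m]

/-- The quadratic form `⟨Z, (u + Δ) Z⟩` of the relative modular operator `Δ X = σ⁻¹ X ρ`, in the
inner product `⟨X, Y⟩ = Tr (Xᴴ σ Y)`. -/
noncomputable def modularForm (u : ℝ) (σ ρ Z : Matrix n n ℂ) : ℝ :=
  u * (Zᴴ * σ * Z).trace.re + (Z * ρ * Zᴴ).trace.re

variable {u : ℝ} {σ ρ X Z B : Matrix n n ℂ}

theorem mul_eq_zero_of_modularForm_le_zero (hσ : σ.PosSemidef) (hρ : ρ.PosSemidef) (hu : 0 < u)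
    (h : modularForm u σ ρ Z ≤ 0) : σ * Z = 0 := by
  have hσZ := Complex.nonneg_iff.mp (hσ.conjTranspose_mul_mul_same Z).trace_nonneg
  have hρZ := Complex.nonneg_iff.mp (hρ.mul_mul_conjTranspose_same Z).trace_nonneg
  refine mul_eq_zero_of_trace_conj_eq_zero hσ (Complex.ext ?_ hσZ.2.symm)
  rw [modularForm] at h
  exact le_antisymm (by_contra fun h0 => by nlinarith [mul_pos hu (not_le.mp h0), hρZ.1]) hσZ.1

theorem modularForm_nonneg (hσ : σ.PosSemidef) (hρ : ρ.PosSemidef) (hu : 0 ≤ u) :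
    0 ≤ modularForm u σ ρ Z :=
  add_nonneg
    (mul_nonneg hu (Complex.nonneg_iff.mp (hσ.conjTranspose_mul_mul_same Z).trace_nonneg).1)
    (Complex.nonneg_iff.mp (hρ.mul_mul_conjTranspose_same Z).trace_nonneg).1

theorem re_trace_conjTranspose (A : Matrix n n ℂ) : Aᴴ.trace.re = A.trace.re := by
  rw [trace_conjTranspose, Complex.star_def, Complex.conj_re]

theorem modularForm_sub (hσ : σ.IsHermitian) (hρ : ρ.IsHermitian)
    (hX : u • (σ * X) + X * ρ = B) (Z : Matrix n n ℂ) :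
    modularForm u σ ρ (X - Z) =
      (Xᴴ * B).trace.re - 2 * (Zᴴ * B).trace.re + modularForm u σ ρ Z := by
  have hσ_cross : (Xᴴ * σ * Z).trace.re = (Zᴴ * σ * X).trace.re := by
    rw [← re_trace_conjTranspose]
    simp only [conjTranspose_mul, conjTranspose_conjTranspose, hσ.eq, Matrix.mul_assoc]
  have hρ_cross : (Z * ρ * Xᴴ).trace.re = (X * ρ * Zᴴ).trace.re := by
    rw [← re_trace_conjTranspose]
    simp only [conjTranspose_mul, conjTranspose_conjTranspose, hρ.eq, Matrix.mul_assoc]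
  have hB : ∀ W : Matrix n n ℂ, (Wᴴ * B).trace.re =
      u * (Wᴴ * σ * X).trace.re + (X * ρ * Wᴴ).trace.re := fun W => by
    rw [← hX, Matrix.mul_add, trace_add, trace_mul_comm _ (X * ρ), Matrix.mul_smul, trace_smul,
      Complex.add_re, Complex.smul_re, smul_eq_mul, Matrix.mul_assoc Wᴴ]
  simp only [modularForm, hB, conjTranspose_sub, Matrix.sub_mul, Matrix.mul_sub, trace_sub,
    Complex.sub_re]
  rw [hσ_cross, hρ_cross]
  ring

theorem modularForm_of_eq (hσ : σ.IsHermitian) (hρ : ρ.IsHermitian)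
    (hX : u • (σ * X) + X * ρ = B) : modularForm u σ ρ X = (Xᴴ * B).trace.re := by
  simpa [modularForm] using modularForm_sub hσ hρ hX 0

theorem re_trace_mul_eq_of_eq (hσ : σ.IsHermitian)
    (hX : u • (σ * X) + X * ρ = B) : (X * ρ).trace.re = B.trace.re - u * (Xᴴ * σ).trace.re := by
  rw [← hX, ← re_trace_conjTranspose (Xᴴ * σ)]
  simp [hσ.eq]

end ModularForm

section Channel

variable {n m : Type*} [Fintype n] [Fintype m]
  {Γ : Matrix n n ℂ →ₗ[ℂ] Matrix m m ℂ} {Γdag : Matrix m m ℂ →ₗ[ℂ] Matrix n n ℂ}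
  {σ ρ : Matrix n n ℂ}

theorem IsTraceAdjoint.trace_mul (hdag : IsTraceAdjoint Γ Γdag) (hσ : σ.IsHermitian)
    (hΓσ : (Γ σ).IsHermitian) (M : Matrix m m ℂ) : (σ * Γdag M).trace = (Γ σ * M).trace := by
  simpa only [hσ.eq, hΓσ.eq] using hdag.symm σ M

theorem IsCompletelyPositive.ker_map_le_ker_map (hΓ : IsCompletelyPositive Γ)
    (hdag : IsTraceAdjoint Γ Γdag) (hσ : σ.PosSemidef) (hρ : ρ.PosSemidef)
    (hsupp : ∀ v, σ *ᵥ v = 0 → ρ *ᵥ v = 0) (v : m → ℂ) (hv : Γ σ *ᵥ v = 0) : Γ ρ *ᵥ v = 0 := by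
  have hproj : (vecMulVec v (star v)).PosSemidef := posSemidef_vecMulVec_self_star v
  have hσ_mul : σ * Γdag (vecMulVec v (star v)) = 0 := by
    refine mul_eq_zero_of_trace_mul_eq_zero hσ ((hΓ.of_isTraceAdjoint hdag).posSemidef_map hproj) ?_
    rw [hdag.trace_mul hσ.isHermitian (hΓ.posSemidef_map hσ).isHermitian, mul_vecMulVec, hv,
      zero_vecMulVec, trace_zero]
  have htrace : (Γ ρ * vecMulVec v (star v)).trace = 0 := by
    rw [← hdag.trace_mul hρ.isHermitian (hΓ.posSemidef_map hρ).isHermitian,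
      mul_eq_zero_of_ker_le_ker hsupp hσ_mul, trace_zero]
  rwa [mul_vecMulVec, trace_vecMulVec, dotProduct_comm,
    (hΓ.posSemidef_map hρ).dotProduct_mulVec_zero_iff] at htrace

namespace IsQuantumChannel

variable {u : ℝ}

theorem re_trace_mul_adjoint_le (hΓ : IsQuantumChannel Γ) (hdag : IsTraceAdjoint Γ Γdag)
    (hσ : σ.PosSemidef) (Y : Matrix m m ℂ) :
    ((Γdag Y)ᴴ * σ * Γdag Y).trace.re ≤ (Yᴴ * Γ σ * Y).trace.re := by
  classical
  have h := trace_mul_nonneg_of_posSemidef hσ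
    ((hΓ.1.of_isTraceAdjoint hdag).schwarz (hdag.map_one hΓ.2) Y)
  rw [Matrix.mul_sub, trace_sub, sub_nonneg,
    hdag.trace_mul hσ.isHermitian (hΓ.1.posSemidef_map hσ).isHermitian] at h
  rw [Matrix.mul_assoc, Matrix.mul_assoc, trace_mul_comm, trace_mul_comm Yᴴ, Matrix.mul_assoc,
    Matrix.mul_assoc]
  exact (Complex.le_def.mp h).1

theorem modularForm_adjoint_le (hΓ : IsQuantumChannel Γ) (hdag : IsTraceAdjoint Γ Γdag)
    (hσ : σ.PosSemidef) (hρ : ρ.PosSemidef) (hu : 0 ≤ u) (Y : Matrix m m ℂ) :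
    modularForm u σ ρ (Γdag Y) ≤ modularForm u (Γ σ) (Γ ρ) Y := by
  have hright := hΓ.re_trace_mul_adjoint_le hdag hρ Yᴴ
  simp only [(hΓ.1.of_isTraceAdjoint hdag).map_conjTranspose, conjTranspose_conjTranspose] at hright
  exact add_le_add (mul_le_mul_of_nonneg_left (hΓ.re_trace_mul_adjoint_le hdag hσ Y) hu) hright

theorem modularForm_sub_adjoint_le (hΓ : IsQuantumChannel Γ) (hdag : IsTraceAdjoint Γ Γdag)
    (hσ : σ.PosSemidef) (hρ : ρ.PosSemidef) (hu : 0 ≤ u) {X : Matrix n n ℂ} {Y : Matrix m m ℂ}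
    (hX : u • (σ * X) + X * ρ = σ) (hY : u • (Γ σ * Y) + Y * Γ ρ = Γ σ) :
    modularForm u σ ρ (X - Γdag Y) ≤ (Xᴴ * σ).trace.re - (Yᴴ * Γ σ).trace.re := by
  have hY_form := modularForm_of_eq (hΓ.1.posSemidef_map hσ).isHermitian
    (hΓ.1.posSemidef_map hρ).isHermitian hY
  rw [modularForm_sub hσ.isHermitian hρ.isHermitian hX, ← hdag]
  linarith [hΓ.modularForm_adjoint_le hdag hσ hρ hu Y]

variable [DecidableEq n] [DecidableEq m]

theorem modularForm_modularResolvent_sub_le (hΓ : IsQuantumChannel Γ)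
    (hdag : IsTraceAdjoint Γ Γdag) (hσ : σ.PosSemidef) (hρ : ρ.PosSemidef) (hu : 0 < u) :
    modularForm u σ ρ (modularResolvent hσ.isHermitian hρ.isHermitian u -
        Γdag (modularResolvent (hΓ.1.posSemidef_map hσ).isHermitian
          (hΓ.1.posSemidef_map hρ).isHermitian u)) ≤
      ((modularResolvent (hΓ.1.posSemidef_map hσ).isHermitian
          (hΓ.1.posSemidef_map hρ).isHermitian u * Γ ρ).trace.re -
        (modularResolvent hσ.isHermitian hρ.isHermitian u * ρ).trace.re) / u := by
  have hΓσ := hΓ.1.posSemidef_map hσ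
  have hX := smul_mul_modularResolvent_add hσ hρ hu
  have hY := smul_mul_modularResolvent_add hΓσ (hΓ.1.posSemidef_map hρ) hu
  refine (hΓ.modularForm_sub_adjoint_le hdag hσ hρ hu.le hX hY).trans_eq ?_
  rw [re_trace_mul_eq_of_eq hσ.isHermitian hX, re_trace_mul_eq_of_eq hΓσ.isHermitian hY, hΓ.2,
    eq_div_iff hu.ne']
  ring

theorem re_trace_modularResolvent_mul_eq_of_relEnt_eq (hΓ : IsQuantumChannel Γ)
    (hdag : IsTraceAdjoint Γ Γdag) (hσ : σ.PosSemidef) (hρ : ρ.PosSemidef)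
    (hsupp : ∀ v, σ *ᵥ v = 0 → ρ *ᵥ v = 0) (hEnt : relEnt ρ σ = relEnt (Γ ρ) (Γ σ)) (hu : 0 < u) :
    (modularResolvent hσ.isHermitian hρ.isHermitian u * ρ).trace.re =
      (modularResolvent (hΓ.1.posSemidef_map hσ).isHermitian
        (hΓ.1.posSemidef_map hρ).isHermitian u * Γ ρ).trace.re := by
  have hΓσ := hΓ.1.posSemidef_map hσ
  have hΓρ := hΓ.1.posSemidef_map hρ
  let gap := fun v => entropyPotential hσ.isHermitian hρ.isHermitian v -
    entropyPotential hΓσ.isHermitian hΓρ.isHermitian v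
  have hlog : 0 < Real.log 2 := by positivity
  have hgap_lim : Filter.Tendsto gap Filter.atTop (nhds (gap 0)) := by
    have h := (tendsto_entropyPotential hσ hρ hsupp).sub
      (tendsto_entropyPotential hΓσ hΓρ (hΓ.1.ker_map_le_ker_map hdag hσ hρ hsupp))
    simp only [hΓ.2, sub_sub_sub_cancel_right] at h
    simp only [relEnt, Complex.sub_re] at hEnt
    convert h using 2
    simp only [gap, entropyPotential_zero]
    linarith
  have hderiv_nonpos (v : ℝ) (hv : 0 < v) :
      (modularResolvent hσ.isHermitian hρ.isHermitian v * ρ).trace.re / Real.log 2 -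
        (modularResolvent hΓσ.isHermitian hΓρ.isHermitian v * Γ ρ).trace.re / Real.log 2 ≤ 0 := by
    have h := (modularForm_nonneg hσ hρ hv.le).trans
      (hΓ.modularForm_modularResolvent_sub_le hdag hσ hρ hv)
    rw [le_div_iff₀ hv, zero_mul, sub_nonneg] at h
    exact sub_nonpos.mpr (div_le_div_of_nonneg_right h hlog.le)
  have hderiv_eq := deriv_eq_zero_of_tendsto_left_value
    ((continuousOn_entropyPotential hσ hρ).sub (continuousOn_entropyPotential hΓσ hΓρ))
    (fun v hv => (hasDerivAt_entropyPotential hσ hρ hv).sub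
      (hasDerivAt_entropyPotential hΓσ hΓρ hv)) hderiv_nonpos hgap_lim hu
  exact (div_left_inj' hlog.ne').mp (sub_eq_zero.mp hderiv_eq)

theorem mul_modularResolvent_eq_of_relEnt_eq (hΓ : IsQuantumChannel Γ)
    (hdag : IsTraceAdjoint Γ Γdag) (hσ : σ.PosSemidef) (hρ : ρ.PosSemidef)
    (hsupp : ∀ v, σ *ᵥ v = 0 → ρ *ᵥ v = 0) (hEnt : relEnt ρ σ = relEnt (Γ ρ) (Γ σ)) (hu : 0 < u) :
    σ * modularResolvent hσ.isHermitian hρ.isHermitian u =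
      σ * Γdag (modularResolvent (hΓ.1.posSemidef_map hσ).isHermitian
        (hΓ.1.posSemidef_map hρ).isHermitian u) := by
  rw [← sub_eq_zero, ← Matrix.mul_sub]
  refine mul_eq_zero_of_modularForm_le_zero hσ hρ hu
    ((hΓ.modularForm_modularResolvent_sub_le hdag hσ hρ hu).trans_eq ?_)
  rw [hΓ.re_trace_modularResolvent_mul_eq_of_relEnt_eq hdag hσ hρ hsupp hEnt hu, sub_self, zero_div]

end IsQuantumChannel

end Channel

section CauchyInterpolation

open Polynomial in
theorem exists_eq_sum_mul_inv (S : Finset ℝ) (hS : ∀ x ∈ S, 0 ≤ x) (f : ℝ → ℝ) :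
    ∃ c : ℝ → ℝ, ∀ x ∈ S, f x = ∑ s ∈ S, c s * (s + 1 + x)⁻¹ := by
  -- Expand `p / D` in partial fractions, where `p` interpolates `f * D` on `S`.
  let node : ℝ → ℝ := fun s => -(s + 1)
  let D := Lagrange.nodal S node
  let p := Lagrange.interpolate S id fun x => f x * D.eval x
  have hnode : Set.InjOn node S := fun a _ b _ h => by simpa [node] using h
  have hid : Set.InjOn (id : ℝ → ℝ) S := Function.injective_id.injOn
  refine ⟨fun s => Lagrange.nodalWeight S node s * p.eval (node s), fun x hx => ?_⟩
  have hne (s : ℝ) (hs : s ∈ S) : x ≠ node s :=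
    ((neg_lt_zero.mpr (add_pos_of_nonneg_of_pos (hS s hs) one_pos)).trans_le (hS x hx)).ne'
  have hD : D.eval x ≠ 0 := by
    rw [Lagrange.eval_nodal]
    exact Finset.prod_ne_zero_iff.mpr fun s hs => sub_ne_zero.mpr (hne s hs)
  have hp : p.eval x = f x * D.eval x := Lagrange.eval_interpolate_at_node _ hid hx
  rw [Lagrange.eq_interpolate hnode (f := p) (Lagrange.degree_interpolate_lt _ hid),
    Lagrange.eval_interpolate_not_at_node _ hne, mul_comm] at hp
  rw [← mul_right_cancel₀ hD hp]
  refine Finset.sum_congr rfl fun s _ => ?_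
  rw [sub_neg_eq_add, add_comm x, mul_right_comm]

end CauchyInterpolation

section SqrtFromResolvents

variable {n m : Type*} [Fintype n] [DecidableEq n] [Fintype m] [DecidableEq m]
  {σ ρ : Matrix n n ℂ} {σ' ρ' : Matrix m m ℂ}

theorem invSqrt_mul_sqrt_eq_sum (hσ : σ.PosSemidef) (hρ : ρ.PosSemidef) {S : Finset ℝ}
    {c t : ℝ → ℝ}
    (hc : ∀ j i, √(hρ.isHermitian.eigenvalues i / hσ.isHermitian.eigenvalues j) =
      ∑ s ∈ S, c s * (t s + hρ.isHermitian.eigenvalues i / hσ.isHermitian.eigenvalues j)⁻¹) :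
    invSqrt σ * matFun Real.sqrt ρ =
      ∑ s ∈ S, c s • modularResolvent hσ.isHermitian hρ.isHermitian (t s) := by
  simp only [modularResolvent, ← map_smul, ← map_sum, invSqrt,
    matFun_mul_matFun_eq_doubleFun hσ.isHermitian hρ.isHermitian]
  refine doubleFun_congr fun j i => ?_
  simp only [Finset.sum_apply, Pi.smul_apply, smul_eq_mul]
  rcases (hσ.eigenvalues_nonneg j).eq_or_lt with hx | hx
  · simp [← hx]
  · rw [inv_mul_eq_div, ← Real.sqrt_div (hρ.eigenvalues_nonneg i), hc]
    refine Finset.sum_congr rfl fun s _ => ?_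
    rw [add_div' _ _ _ hx.ne', inv_div]

theorem mul_invSqrt_mul_sqrt_eq_of_forall_resolvent (hσ : σ.PosSemidef) (hρ : ρ.PosSemidef)
    (hσ' : σ'.PosSemidef) (hρ' : ρ'.PosSemidef) (Φ : Matrix m m ℂ →ₗ[ℂ] Matrix n n ℂ)
    (h : ∀ u, 0 < u → σ * modularResolvent hσ.isHermitian hρ.isHermitian u =
      σ * Φ (modularResolvent hσ'.isHermitian hρ'.isHermitian u)) :
    σ * (invSqrt σ * matFun Real.sqrt ρ) = σ * Φ (invSqrt σ' * matFun Real.sqrt ρ') := by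
  let ratio := fun p : n × n => hρ.isHermitian.eigenvalues p.2 / hσ.isHermitian.eigenvalues p.1
  let ratio' := fun p : m × m => hρ'.isHermitian.eigenvalues p.2 / hσ'.isHermitian.eigenvalues p.1
  let S := Finset.univ.image ratio ∪ Finset.univ.image ratio'
  have hS : ∀ x ∈ S, 0 ≤ x := by
    simp only [S, Finset.mem_union, Finset.mem_image, Finset.mem_univ, true_and]
    rintro _ (⟨p, rfl⟩ | ⟨p, rfl⟩)
    · exact div_nonneg (hρ.eigenvalues_nonneg _) (hσ.eigenvalues_nonneg _)
    · exact div_nonneg (hρ'.eigenvalues_nonneg _) (hσ'.eigenvalues_nonneg _)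
  obtain ⟨c, hc⟩ := exists_eq_sum_mul_inv S hS Real.sqrt
  rw [invSqrt_mul_sqrt_eq_sum hσ hρ fun j i => hc (ratio (j, i)) (by simp [S]),
    invSqrt_mul_sqrt_eq_sum hσ' hρ' fun j i => hc (ratio' (j, i)) (by simp [S]), map_sum,
    Matrix.mul_sum, Matrix.mul_sum]
  refine Finset.sum_congr rfl fun s hs => ?_
  rw [LinearMap.map_smul_of_tower, Matrix.mul_smul, Matrix.mul_smul,
    h _ (add_pos_of_nonneg_of_pos (hS s hs) one_pos)]

end SqrtFromResolvents

section Petz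

variable {n m : Type*} [Fintype n] [DecidableEq n] [Fintype m] [DecidableEq m]
  {Γ : Matrix n n ℂ →ₗ[ℂ] Matrix m m ℂ} {Γdag : Matrix m m ℂ →ₗ[ℂ] Matrix n n ℂ}
  {σ ρ : Matrix n n ℂ}

theorem petzMap_eq_comp (σ : Matrix n n ℂ) (Γ : Matrix n n ℂ →ₗ[ℂ] Matrix m m ℂ)
    (Γdag : Matrix m m ℂ →ₗ[ℂ] Matrix n n ℂ) :
    petzMap σ Γ Γdag = conjBy (matFun Real.sqrt σ) ∘ₗ Γdag ∘ₗ conjBy (invSqrt (Γ σ)) := by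
  ext1 τ
  change _ = matFun Real.sqrt σ * Γdag (invSqrt (Γ σ) * τ * (invSqrt (Γ σ))ᴴ) *
    (matFun Real.sqrt σ)ᴴ
  rw [(isHermitian_matFun _ σ).eq, (isHermitian_invSqrt (Γ σ)).eq]
  rfl

theorem petzMap_mul_conjTranspose (σ : Matrix n n ℂ) (Γ : Matrix n n ℂ →ₗ[ℂ] Matrix m m ℂ)
    (Γdag : Matrix m m ℂ →ₗ[ℂ] Matrix n n ℂ) (C : Matrix m m ℂ) :
    petzMap σ Γ Γdag (C * Cᴴ) = matFun Real.sqrt σ *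
      Γdag (invSqrt (Γ σ) * C * (invSqrt (Γ σ) * C)ᴴ) * matFun Real.sqrt σ := by
  rw [conjTranspose_mul, (isHermitian_invSqrt (Γ σ)).eq,
    ← Matrix.mul_assoc (invSqrt (Γ σ) * C), Matrix.mul_assoc (invSqrt (Γ σ)) C]
  rfl

theorem isCompletelyPositive_petzMap (hΓ : IsCompletelyPositive Γ) (hdag : IsTraceAdjoint Γ Γdag) :
    IsCompletelyPositive (petzMap σ Γ Γdag) := by
  rw [petzMap_eq_comp]
  exact (isCompletelyPositive_conjBy _).comp
    ((hΓ.of_isTraceAdjoint hdag).comp (isCompletelyPositive_conjBy _))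

theorem trace_petzMap (hΓ : IsCompletelyPositive Γ) (hdag : IsTraceAdjoint Γ Γdag)
    (hσ : σ.PosSemidef) {τ : Matrix m m ℂ} (hτ : suppProj (Γ σ) * τ * suppProj (Γ σ) = τ) :
    (petzMap σ Γ Γdag τ).trace = τ.trace := by
  have hΓσ := hΓ.posSemidef_map hσ
  calc (petzMap σ Γ Γdag τ).trace
      = (σ * Γdag (invSqrt (Γ σ) * τ * invSqrt (Γ σ))).trace := by
        rw [petzMap, LinearMap.coe_mk, AddHom.coe_mk, trace_mul_cycle, matFun_sqrt_mul_self hσ]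
    _ = (invSqrt (Γ σ) * Γ σ * invSqrt (Γ σ) * τ).trace := by
        rw [hdag.trace_mul hσ.isHermitian hΓσ.isHermitian, ← Matrix.mul_assoc, trace_mul_comm]
        simp only [Matrix.mul_assoc]
    _ = τ.trace := by
        rw [invSqrt_mul_self_mul_invSqrt hΓσ]
        nth_rw 1 [← hτ]
        rw [← Matrix.mul_assoc, ← Matrix.mul_assoc, suppProj_mul_self, hτ]

theorem trace_petzMap_map (hΓ : IsQuantumChannel Γ) (hdag : IsTraceAdjoint Γ Γdag)
    (hσ : σ.PosSemidef) (hρ : ρ.PosSemidef) (hsupp : ∀ v, σ *ᵥ v = 0 → ρ *ᵥ v = 0) :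
    (petzMap σ Γ Γdag (Γ ρ)).trace = ρ.trace := by
  have hΓσ := (hΓ.1.posSemidef_map hσ).isHermitian
  have hΓρ := (hΓ.1.posSemidef_map hρ).isHermitian
  have hker := hΓ.1.ker_map_le_ker_map hdag hσ hρ hsupp
  refine (trace_petzMap hΓ.1 hdag hσ ?_).trans (hΓ.2 ρ)
  rw [suppProj_mul_of_ker_le_ker hΓσ hΓρ hker, mul_suppProj_of_ker_le_ker hΓσ hker]

theorem sqrt_eq_sqrt_mul_of_relEnt_eq (hΓ : IsQuantumChannel Γ) (hdag : IsTraceAdjoint Γ Γdag)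
    (hσ : σ.PosSemidef) (hρ : ρ.PosSemidef) (hsupp : ∀ v, σ *ᵥ v = 0 → ρ *ᵥ v = 0)
    (hEnt : relEnt ρ σ = relEnt (Γ ρ) (Γ σ)) :
    matFun Real.sqrt ρ =
      matFun Real.sqrt σ * Γdag (invSqrt (Γ σ) * matFun Real.sqrt (Γ ρ)) := by
  have hsqrt : suppProj σ * matFun Real.sqrt ρ = matFun Real.sqrt ρ := by
    rw [← self_mul_invSqrt hρ, ← Matrix.mul_assoc,
      suppProj_mul_of_ker_le_ker hσ.isHermitian hρ.isHermitian hsupp]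
  have h := mul_invSqrt_mul_sqrt_eq_of_forall_resolvent hσ hρ (hΓ.1.posSemidef_map hσ)
    (hΓ.1.posSemidef_map hρ) Γdag fun u hu =>
      hΓ.mul_modularResolvent_eq_of_relEnt_eq hdag hσ hρ hsupp hEnt hu
  rw [← hsqrt, ← invSqrt_mul_self_mul_invSqrt hσ, ← invSqrt_mul_self hσ]
  simpa only [Matrix.mul_assoc] using congrArg (invSqrt σ * ·) h

theorem petzMap_map_eq_of_relEnt_eq (hΓ : IsQuantumChannel Γ) (hdag : IsTraceAdjoint Γ Γdag)
    (hσ : σ.PosSemidef) (hρ : ρ.PosSemidef) (hsupp : ∀ v, σ *ᵥ v = 0 → ρ *ᵥ v = 0)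
    (hEnt : relEnt ρ σ = relEnt (Γ ρ) (Γ σ)) : petzMap σ Γ Γdag (Γ ρ) = ρ := by
  let A := invSqrt (Γ σ) * matFun Real.sqrt (Γ ρ)
  have hsqrt : matFun Real.sqrt ρ = matFun Real.sqrt σ * Γdag A :=
    sqrt_eq_sqrt_mul_of_relEnt_eq hΓ hdag hσ hρ hsupp hEnt
  have hsqrt_adj : matFun Real.sqrt ρ = (Γdag A)ᴴ * matFun Real.sqrt σ := by
    simpa only [conjTranspose_mul, (isHermitian_matFun Real.sqrt _).eq] using
      congrArg conjTranspose hsqrt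
  have hpetz : petzMap σ Γ Γdag (Γ ρ) =
      matFun Real.sqrt σ * Γdag (A * Aᴴ) * matFun Real.sqrt σ := by
    rw [← petzMap_mul_conjTranspose, (isHermitian_matFun _ (Γ ρ)).eq,
      matFun_sqrt_mul_self (hΓ.1.posSemidef_map hρ)]
  have hdiff : petzMap σ Γ Γdag (Γ ρ) - ρ =
      matFun Real.sqrt σ * (Γdag (A * Aᴴ) - Γdag A * (Γdag A)ᴴ) * (matFun Real.sqrt σ)ᴴ := by
    rw [(isHermitian_matFun Real.sqrt σ).eq, Matrix.mul_sub, Matrix.sub_mul, ← hpetz]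
    congr 1
    nth_rw 1 [← matFun_sqrt_mul_self hρ, hsqrt, hsqrt_adj]
    simp only [Matrix.mul_assoc]
  have hpos : (petzMap σ Γ Γdag (Γ ρ) - ρ).PosSemidef := by
    rw [hdiff]
    exact ((hΓ.1.of_isTraceAdjoint hdag).schwarz (hdag.map_one hΓ.2) A).mul_mul_conjTranspose_same _
  refine sub_eq_zero.mp (hpos.trace_eq_zero_iff.mp ?_)
  rw [trace_sub, trace_petzMap_map hΓ hdag hσ hρ hsupp, sub_self]

theorem relEnt_self (ρ : Matrix n n ℂ) : relEnt ρ ρ = 0 := by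
  rw [relEnt, sub_self, Complex.zero_re]

end Petz

theorem petz_recovery_general {n m : Type*} [Fintype n] [DecidableEq n]
    [Fintype m] [DecidableEq m]
    (ρ σ : Matrix n n ℂ) (hρ : ρ.PosSemidef) (hσ : σ.PosSemidef)
    (hsupp : ∀ v, σ *ᵥ v = 0 → ρ *ᵥ v = 0)
    (Γ : Matrix n n ℂ →ₗ[ℂ] Matrix m m ℂ) (hΓ : IsQuantumChannel Γ)
    (Γdag : Matrix m m ℂ →ₗ[ℂ] Matrix n n ℂ) (hdag : IsTraceAdjoint Γ Γdag) :
    IsCompletelyPositive (petzMap σ Γ Γdag) ∧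
      (∀ τ : Matrix m m ℂ, suppProj (Γ σ) * τ * suppProj (Γ σ) = τ →
        (petzMap σ Γ Γdag τ).trace = τ.trace) ∧
      petzMap σ Γ Γdag (Γ σ) = σ ∧
      (relEnt ρ σ = relEnt (Γ ρ) (Γ σ) → petzMap σ Γ Γdag (Γ ρ) = ρ) :=
  ⟨isCompletelyPositive_petzMap hΓ.1 hdag, fun _ => trace_petzMap hΓ.1 hdag hσ,
    petzMap_map_eq_of_relEnt_eq hΓ hdag hσ hσ (fun _ => id) (by rw [relEnt_self, relEnt_self]),
    petzMap_map_eq_of_relEnt_eq hΓ hdag hσ hρ hsupp⟩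

/-- **Petz recovery.** The Petz map is completely positive, trace-preserving on the
support of `Γ[σ]`, recovers `σ` perfectly, and recovers any `ρ` (with
`supp ρ ⊆ supp σ`) perfectly whenever the data-processing inequality for the relative
entropy is saturated. -/
theorem petz_recovery {n m : Type*} [Fintype n] [DecidableEq n]
    [Fintype m] [DecidableEq m]
    (ρ σ : Matrix n n ℂ) (hρ : IsDensityMatrix ρ) (hσ : IsDensityMatrix σ)
    (hsupp : ∀ v, σ *ᵥ v = 0 → ρ *ᵥ v = 0)
    (Γ : Matrix n n ℂ →ₗ[ℂ] Matrix m m ℂ) (hΓ : IsQuantumChannel Γ)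
    (Γdag : Matrix m m ℂ →ₗ[ℂ] Matrix n n ℂ)
    (hdag : ∀ (X : Matrix m m ℂ) (Y : Matrix n n ℂ),
      (Xᴴ * Γ Y).trace = ((Γdag X)ᴴ * Y).trace) :
    IsCompletelyPositive (petzMap σ Γ Γdag) ∧
      (∀ τ : Matrix m m ℂ, suppProj (Γ σ) * τ * suppProj (Γ σ) = τ →
        (petzMap σ Γ Γdag τ).trace = τ.trace) ∧
      petzMap σ Γ Γdag (Γ σ) = σ ∧
      (relEnt ρ σ = relEnt (Γ ρ) (Γ σ) → petzMap σ Γ Γdag (Γ ρ) = ρ) :=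
  petz_recovery_general ρ σ hρ.1 hσ.1 hsupp Γ hΓ Γdag hdag
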